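/- arXiv:1609.08935 — 2 statements merged into one kernel-verified Lean document; each statement's English description precedes it below -/
import Mathlib

section
/- For any linear locally repairable code of length n, dimension k, minimum distance d, and locality r, the minimum distance satisfies d ≤ n - k - ⌈k/r⌉ + 2. -/
/-- Codewords of `C` that vanish on `S`. -/
def lrcZ {F : Type*} [Field F] {n : ℕ} (C : Submodule F (Fin n → F)) (S : Finset (Fin n)) :
    Submodule F (Fin n → F) where
  carrier := {x | x ∈ C ∧ ∀ i ∈ S, x i = 0}
  add_mem' := by
    rintro a b ⟨ha, ha2⟩ ⟨hb, hb2⟩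
    exact ⟨C.add_mem ha hb, fun i hi => by simp [ha2 i hi, hb2 i hi]⟩
  zero_mem' := ⟨C.zero_mem, fun i _ => rfl⟩
  smul_mem' := by
    rintro c a ⟨ha, ha2⟩
    exact ⟨C.smul_mem c ha, fun i hi => by simp [ha2 i hi]⟩

theorem lrcZ_mem {F : Type*} [Field F] {n : ℕ} (C : Submodule F (Fin n → F))
    (S : Finset (Fin n)) (x : Fin n → F) : x ∈ lrcZ C S ↔ x ∈ C ∧ ∀ i ∈ S, x i = 0 := Iff.rfl

theorem lrcZ_insert {F : Type*} [Field F] {n : ℕ} (C : Submodule F (Fin n → F))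
    (S : Finset (Fin n)) (i : Fin n) :
    Module.finrank F (lrcZ C S) ≤ Module.finrank F (lrcZ C (insert i S)) + 1 := by
  let f : (Fin n → F) →ₗ[F] F := LinearMap.proj i
  have h1 : lrcZ C (insert i S) = lrcZ C S ⊓ LinearMap.ker f := by
    ext x
    simp only [lrcZ_mem, Submodule.mem_inf, LinearMap.mem_ker, Finset.forall_mem_insert, f,
      LinearMap.proj_apply]
    tauto
  have h2 := Submodule.finrank_sup_add_finrank_inf_eq (lrcZ C S) (LinearMap.ker f)
  have h3 := Submodule.finrank_le (lrcZ C S ⊔ LinearMap.ker f)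
  have h4 := LinearMap.finrank_range_add_finrank_ker f
  have h5 := Submodule.finrank_le (LinearMap.range f)
  rw [Module.finrank_self] at h5
  rw [h1]
  omega

theorem lrcZ_union {F : Type*} [Field F] {n : ℕ} (C : Submodule F (Fin n → F))
    (S T : Finset (Fin n)) :
    Module.finrank F (lrcZ C S) ≤ Module.finrank F (lrcZ C (S ∪ T)) + T.card := by
  induction T using Finset.induction_on with
  | empty => rw [Finset.union_empty]; omega
  | insert a T ha ih =>
    have := lrcZ_insert C (S ∪ T) a
    rw [Finset.union_insert, Finset.card_insert_of_notMem ha]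
    omega

theorem lrcZ_exists {F : Type*} [Field F] {n : ℕ} (C : Submodule F (Fin n → F))
    (S : Finset (Fin n)) (h : 1 ≤ Module.finrank F (lrcZ C S)) :
    ∃ x ∈ lrcZ C S, x ≠ 0 := by
  apply Submodule.exists_mem_ne_zero_of_ne_bot
  intro hb
  rw [hb, finrank_bot] at h
  omega

theorem lrcZ_step {F : Type*} [Field F] [DecidableEq F] {n r : ℕ} (C : Submodule F (Fin n → F))
    (hloc : ∀ i : Fin n, ∃ y : Fin n → F,
        (∀ x ∈ C, ∑ j, x j * y j = 0) ∧ hammingNorm y ≤ r + 1 ∧ y i ≠ 0)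
    (S : Finset (Fin n)) (h : 1 ≤ Module.finrank F (lrcZ C S)) :
    ∃ S' : Finset (Fin n),
      S.card + Module.finrank F (lrcZ C S) + 1 ≤ S'.card + Module.finrank F (lrcZ C S') ∧
      Module.finrank F (lrcZ C S) ≤ Module.finrank F (lrcZ C S') + r := by
  obtain ⟨x, hx, hx0⟩ := lrcZ_exists C S h
  obtain ⟨i, hi⟩ := Function.ne_iff.mp hx0
  have hiS : i ∉ S := fun hh => hi (hx.2 i hh)
  obtain ⟨y, hy, hw, hyi⟩ := hloc i
  let R : Finset (Fin n) := Finset.univ.filter (fun j => y j ≠ 0)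
  have hR : R.card ≤ r + 1 := hw
  have hiR : i ∈ R := by simp [R, hyi]
  let T := R.erase i \ S
  have hiT : i ∉ S ∪ T := by simp [T, hiS]
  have hT : T.card ≤ r := by
    have h1 : T.card ≤ (R.erase i).card := Finset.card_le_card Finset.sdiff_subset
    rw [Finset.card_erase_of_mem hiR] at h1
    omega
  have heq : lrcZ C (insert i (S ∪ T)) = lrcZ C (S ∪ T) := by
    ext z
    simp only [lrcZ_mem, Finset.forall_mem_insert]
    refine ⟨fun hz => ⟨hz.1, hz.2.2⟩, fun hz => ⟨hz.1, ?_, hz.2⟩⟩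
    have hs := hy z hz.1
    rw [Finset.sum_eq_single i] at hs
    · exact (mul_eq_zero.mp hs).resolve_right hyi
    · intro j _ hj
      by_cases hyj : y j = 0
      · simp [hyj]
      · have : j ∈ S ∪ T := by
          by_cases hjS : j ∈ S <;> simp [T, R, hjS, hj, hyj]
        simp [hz.2 j this]
    · simp
  have hu := lrcZ_union C S T
  have hc : (S ∪ T).card = S.card + T.card :=
    Finset.card_union_of_disjoint Finset.disjoint_sdiff
  refine ⟨insert i (S ∪ T), ?_, ?_⟩
  · rw [heq, Finset.card_insert_of_notMem hiT]
    omega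
  · rw [heq]
    omega

theorem lrcZ_iter {F : Type*} [Field F] [DecidableEq F] {n r : ℕ} (C : Submodule F (Fin n → F))
    (hloc : ∀ i : Fin n, ∃ y : Fin n → F,
        (∀ x ∈ C, ∑ j, x j * y j = 0) ∧ hammingNorm y ≤ r + 1 ∧ y i ≠ 0)
    (t : ℕ) (ht : t * r < Module.finrank F C) :
    ∃ S : Finset (Fin n),
      Module.finrank F C + t ≤ S.card + Module.finrank F (lrcZ C S) ∧
      Module.finrank F C ≤ Module.finrank F (lrcZ C S) + t * r := by
  induction t with
  | zero =>
    have : lrcZ C ∅ = C := by ext; simp [lrcZ_mem]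
    exact ⟨∅, by rw [this]; simp, by rw [this]; simp⟩
  | succ t ih =>
    rw [Nat.succ_mul] at ht ⊢
    obtain ⟨S, h1, h2⟩ := ih (by omega)
    obtain ⟨S', h3, h4⟩ := lrcZ_step C hloc S (by omega)
    exact ⟨S', by omega, by omega⟩

theorem lrcZ_final {F : Type*} [Field F] {n : ℕ} (C : Submodule F (Fin n → F))
    (S : Finset (Fin n)) (h : 1 ≤ Module.finrank F (lrcZ C S)) :
    ∃ S' : Finset (Fin n), 1 ≤ Module.finrank F (lrcZ C S') ∧
      S.card + Module.finrank F (lrcZ C S) ≤ S'.card + 1 := by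
  have h1 := lrcZ_union C S Sᶜ
  have h0 : lrcZ C (S ∪ Sᶜ) = ⊥ := by
    rw [eq_bot_iff]
    intro x hx
    rw [Submodule.mem_bot]
    ext i
    exact hx.2 i (by simp)
  rw [h0, finrank_bot] at h1
  obtain ⟨T, hTS, hT⟩ := Finset.exists_subset_card_eq
    (show Module.finrank F (lrcZ C S) - 1 ≤ (Sᶜ).card by omega)
  have h2 := lrcZ_union C S T
  have hc : (S ∪ T).card = S.card + T.card :=
    Finset.card_union_of_disjoint (Finset.disjoint_left.mpr fun a ha hb =>
      (Finset.mem_compl.mp (hTS hb)) ha)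
  exact ⟨S ∪ T, by omega, by omega⟩

/-- Singleton-type bound for locally repairable codes:
`d ≤ n - k - ⌈k/r⌉ + 2`. -/
theorem lrc_singleton_bound
    (F : Type*) [Field F] [Fintype F] [DecidableEq F]
    (n k d r : ℕ) (hr : 0 < r)
    (C : Submodule F (Fin n → F))
    (hk : Module.finrank F C = k)
    -- locality `r`: every coordinate is in the support of a dual codeword of
    -- Hamming weight at most `r + 1`
    (hloc : ∀ i : Fin n, ∃ y : Fin n → F,
        (∀ x ∈ C, ∑ j, x j * y j = 0) ∧ hammingNorm y ≤ r + 1 ∧ y i ≠ 0)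
    -- `d` is the minimum Hamming distance of `C`
    (hd : ∀ x ∈ C, x ≠ 0 → d ≤ hammingNorm x)
    (hd' : ∃ x ∈ C, x ≠ 0 ∧ hammingNorm x = d) :
    (d : ℤ) ≤ (n : ℤ) - (k : ℤ) - ⌈(k : ℚ) / (r : ℚ)⌉ + 2 := by
  obtain ⟨x0, hx0, hx0', -⟩ := hd'
  have hkpos : 0 < k := by
    rw [← hk]
    by_contra hcon
    have : Module.finrank F C = 0 := by omega
    rw [Submodule.finrank_eq_zero] at this
    rw [this] at hx0
    exact hx0' ((Submodule.mem_bot F).mp hx0)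
  have htr : (k - 1) / r * r < k := by
    have := Nat.div_mul_le_self (k - 1) r
    omega
  have hceil : ⌈(k : ℚ) / (r : ℚ)⌉ ≤ (((k - 1) / r : ℕ) : ℤ) + 1 := by
    rw [Int.ceil_le, div_le_iff₀ (by exact_mod_cast hr)]
    have h1 := Nat.lt_div_mul_add (a := k - 1) hr
    have h2 : k ≤ ((k - 1) / r + 1) * r := by
      rw [Nat.succ_mul]
      omega
    exact_mod_cast h2
  generalize (k - 1) / r = t at htr hceil
  subst hk
  obtain ⟨S, h1, h2⟩ := lrcZ_iter C hloc t htr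
  obtain ⟨S', h3, h4⟩ := lrcZ_final C S (by omega)
  obtain ⟨x, hx, hxne⟩ := lrcZ_exists C S' h3
  have h5 := hd x hx.1 hxne
  have h6 : hammingNorm x ≤ (S'ᶜ).card := by
    apply Finset.card_le_card
    intro i hi
    rw [Finset.mem_compl]
    intro hiS
    exact (Finset.mem_filter.mp hi).2 (hx.2 i hiS)
  have h7 := Finset.card_add_card_compl S'
  rw [Fintype.card_fin] at h7
  omega
end

section
/- Let C be a binary linear code of length n with locality r (every coordinate is in the support of a dual codeword of weight exactly r+1). Then there exists a linearly independent set of dual codewords, each of Hamming weight r+1, the union of whose supports equals {1,...,n}. -/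
/-- For a binary linear code with locality `r`, there is a linearly
independent set of weight-`(r+1)` dual codewords whose supports cover all
coordinates. -/
theorem exists_linearIndependent_parity_checks_covering
    (n r : ℕ) (C : Submodule (ZMod 2) (Fin n → ZMod 2))
    (hloc : ∀ i : Fin n, ∃ y : Fin n → ZMod 2,
        (∀ x ∈ C, ∑ j, x j * y j = 0) ∧ hammingNorm y = r + 1 ∧ y i ≠ 0) :
    ∃ S : Finset (Fin n → ZMod 2),
      (∀ y ∈ S, (∀ x ∈ C, ∑ j, x j * y j = 0) ∧ hammingNorm y = r + 1) ∧
      LinearIndependent (ZMod 2) (fun y : S => (y : Fin n → ZMod 2)) ∧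
      (∀ i : Fin n, ∃ y ∈ S, y i ≠ 0) := by
  classical
  obtain ⟨b, hbT, hspan, hli⟩ := exists_linearIndependent (ZMod 2)
    {y : Fin n → ZMod 2 | (∀ x ∈ C, ∑ j, x j * y j = 0) ∧ hammingNorm y = r + 1}
  have hfin : b.Finite := Set.toFinite b
  refine ⟨hfin.toFinset, fun y hy => hbT (hfin.mem_toFinset.1 hy), ?_, ?_⟩
  · exact hli.comp (fun y : hfin.toFinset => (⟨y.1, hfin.mem_toFinset.1 y.2⟩ : b))
      (fun y z h => Subtype.ext (congrArg (fun w : b => w.1) h))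
  · intro i
    by_contra! hcon
    obtain ⟨y, hy1, hy2, hyi⟩ := hloc i
    have hy : y ∈ Submodule.span (ZMod 2) b := by
      rw [hspan]
      exact Submodule.subset_span ⟨hy1, hy2⟩
    have hle : Submodule.span (ZMod 2) b ≤
        LinearMap.ker (LinearMap.proj i : (Fin n → ZMod 2) →ₗ[ZMod 2] ZMod 2) :=
      Submodule.span_le.2 fun z hz => hcon z (hfin.mem_toFinset.2 hz)
    exact hyi (hle hy)
end
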